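/- arXiv:1011.1338 — 7 statements merged into one kernel-verified Lean document; each statement's English description precedes it below -/
import Mathlib

section
/- Let v be a vote on a finite candidate set C and let Γ be a set of unordered pairs of distinct candidates. If two swap sequences starting from v each transpose exactly the pairs of Γ, each pair exactly once, then both sequences end at the same vote, namely the relation obtained from v by reversing the relative order of exactly the pairs in Γ (which is therefore again a strict linear order). In other words, the vote v^Γ obtained by applying an admissible set of swaps Γ is independent of the order in which the swaps are applied. -/
open Finset

/-- A vote on candidate set `C` with `m` candidates: a strict linear order on `C`,
given as a bijection mapping each candidate to its (0-based) position in `Fin m`,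
position `0` being the most preferred. -/
abbrev Vote (C : Type*) (m : ℕ) := C ≃ Fin m

/-- The rank of candidate `c` in vote `v`, an element of `{1, …, m}`;
rank 1 is the most preferred position. -/
def rankOf {C : Type*} {m : ℕ} (v : Vote C m) (c : C) : ℕ := (v c : ℕ) + 1

/-- `IsSwapSeq v l u` : the list `l` records a sequence of adjacent transpositions
transforming vote `v` into vote `u`; each list entry `(a, b)` is the (oriented)
pair of candidates being transposed, where `a` is ranked directly above `b`
in the current vote at the moment of the swap. -/
inductive IsSwapSeq {C : Type*} [DecidableEq C] {m : ℕ} :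
    Vote C m → List (C × C) → Vote C m → Prop
  | nil (v : Vote C m) : IsSwapSeq v [] v
  | cons (v : Vote C m) (a b : C) (l : List (C × C)) (u : Vote C m)
      (hadj : (v a : ℕ) + 1 = (v b : ℕ))
      (htail : IsSwapSeq ((Equiv.swap a b).trans v) l u) :
      IsSwapSeq v ((a, b) :: l) u

/-- Oriented representatives of the unordered pairs of candidates that are ranked
in opposite relative order by votes `v` and `u` (each discordant unordered pair
`{a,b}` is represented by the unique orientation with `a` preferred to `b` in `v`). -/
def discordantPairs {C : Type*} [Fintype C] [DecidableEq C] {m : ℕ}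
    (v u : Vote C m) : Finset (C × C) :=
  Finset.univ.filter fun p => v p.1 < v p.2 ∧ u p.2 < u p.1

/-!
An adjacent transposition changes the relative order of the two transposed candidates and of no
other pair, since a third candidate lies on the same side of both. Hence, along any swap sequence,
a pair ends up reversed exactly when it has been transposed an odd number of times. As a vote is
determined by the relative order of its pairs, only these parities matter for the resulting vote.
-/

section LinearOrder

variable {α : Type*} [LinearOrder α]

theorem swap_lt_swap_iff_of_covBy {i j : α} (h : i ⋖ j) (x y : α) :
    Equiv.swap i j x < Equiv.swap i j y ↔ if s(x, y) = s(i, j) then y < x else x < y := by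
  have lt_left_iff_lt_right : ∀ z ≠ i, (z < i ↔ z < j) := fun z hz =>
    ⟨fun hzi => hzi.trans h.lt, fun hzj => (h.le_of_lt hzj).lt_of_ne hz⟩
  have left_lt_iff_right_lt : ∀ z ≠ j, (i < z ↔ j < z) := fun z hz =>
    ⟨fun hiz => (h.ge_of_gt hiz).lt_of_ne' hz, h.lt.trans⟩
  have hij : i < j := h.lt
  simp only [Equiv.swap_apply_def, Sym2.eq_iff]
  grind

theorem equiv_eq_of_lt_iff_lt [WellFoundedLT α] {β : Type*} {f g : β ≃ α}
    (h : ∀ a b, f a < f b ↔ g a < g b) : f = g := by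
  let e : α ≃o α := .ofRelIsoLT ⟨f.symm.trans g, fun {i j} => by simp [← h]⟩
  have he : e = OrderIso.refl α := Subsingleton.elim _ _
  ext c
  calc f c = e (f c) := by rw [he, OrderIso.refl_apply]
    _ = g c := congrArg g (f.symm_apply_apply c)

end LinearOrder

theorem mem_toFinset_iff_odd_count_of_nodup {α : Type*} [DecidableEq α] {l : List α} (h : l.Nodup)
    (e : α) : e ∈ l.toFinset ↔ Odd (l.count e) := by
  rw [h.count, List.mem_toFinset]
  split_ifs with he <;> simp [he]

section Vote

variable {C : Type*} [DecidableEq C] {m : ℕ} {v : Vote C m}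

theorem adjacent_swap_lt_iff {a b : C} (hadj : (v a : ℕ) + 1 = v b) (x y : C) :
    (Equiv.swap a b).trans v x < (Equiv.swap a b).trans v y ↔
      if s(x, y) = s(a, b) then v y < v x else v x < v y := by
  have hcov : v a ⋖ v b := Fin.covBy_iff.2 (Order.covBy_iff_add_one_eq.2 hadj)
  simpa only [Equiv.trans_apply, v.injective.map_swap, ← Sym2.map_mk,
    (Sym2.map.injective v.injective).eq_iff] using swap_lt_swap_iff_of_covBy hcov (v x) (v y)

theorem IsSwapSeq.lt_iff {u : Vote C m} {l : List (C × C)} (h : IsSwapSeq v l u) (x y : C) :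
    u x < u y ↔
      if Odd ((l.map fun p => s(p.1, p.2)).count s(x, y)) then v y < v x else v x < v y := by
  induction h with
  | nil v => simp
  | cons v a b l u hadj _ ih =>
    rw [ih, adjacent_swap_lt_iff hadj x y, adjacent_swap_lt_iff hadj y x,
      Sym2.eq_swap (a := y), List.map_cons]
    by_cases hxy : s(x, y) = s(a, b)
    · simp only [hxy, if_true, List.count_cons_self, Nat.odd_add_one, ite_not]
    · simp only [hxy, if_false, List.count_cons_of_ne (Ne.symm hxy)]

theorem swapSeq_result_independent_of_order_general {Γ : Finset (Sym2 C)}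
    {l₁ l₂ : List (C × C)} {u₁ u₂ : Vote C m}
    (h₁ : IsSwapSeq v l₁ u₁) (h₂ : IsSwapSeq v l₂ u₂)
    (hΓ₁ : ∀ e, e ∈ Γ ↔ Odd ((l₁.map fun p => s(p.1, p.2)).count e))
    (hΓ₂ : ∀ e, e ∈ Γ ↔ Odd ((l₂.map fun p => s(p.1, p.2)).count e)) :
    u₁ = u₂ ∧
    ∀ a b : C, u₁ a < u₁ b ↔ if s(a, b) ∈ Γ then v b < v a else v a < v b := by
  have lt_iff {u : Vote C m} {l : List (C × C)} (h : IsSwapSeq v l u)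
      (hΓ : ∀ e, e ∈ Γ ↔ Odd ((l.map fun p => s(p.1, p.2)).count e)) (a b : C) :
      u a < u b ↔ if s(a, b) ∈ Γ then v b < v a else v a < v b := by
    simpa only [hΓ] using h.lt_iff a b
  exact ⟨equiv_eq_of_lt_iff_lt fun a b => (lt_iff h₁ hΓ₁ a b).trans (lt_iff h₂ hΓ₂ a b).symm,
    lt_iff h₁ hΓ₁⟩

end Vote

/-- If two swap sequences starting from the vote `v` each transpose
exactly the unordered pairs of `Γ`, each pair exactly once, then they end at the same
vote, namely the strict linear order obtained from `v` by reversing the relative order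
of exactly the pairs in `Γ`.  In particular the vote `v^Γ` obtained by applying an
admissible set of swaps `Γ` does not depend on the order in which the swaps are applied. -/
theorem swapSeq_result_independent_of_order
    {C : Type*} [Fintype C] [DecidableEq C] {m : ℕ} (v : Vote C m)
    (Γ : Finset (Sym2 C)) (l₁ l₂ : List (C × C)) (u₁ u₂ : Vote C m)
    (h₁ : IsSwapSeq v l₁ u₁) (h₂ : IsSwapSeq v l₂ u₂)
    (hn₁ : (l₁.map fun p => s(p.1, p.2)).Nodup)
    (hn₂ : (l₂.map fun p => s(p.1, p.2)).Nodup)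
    (hΓ₁ : (l₁.map fun p => s(p.1, p.2)).toFinset = Γ)
    (hΓ₂ : (l₂.map fun p => s(p.1, p.2)).toFinset = Γ) :
    u₁ = u₂ ∧
    ∀ a b : C, a ≠ b →
      (u₁ a < u₁ b ↔ if s(a, b) ∈ Γ then v b < v a else v a < v b) := by
  exact (swapSeq_result_independent_of_order_general h₁ h₂
    (fun _ => hΓ₁ ▸ mem_toFinset_iff_odd_count_of_nodup hn₁ _)
    (fun _ => hΓ₂ ▸ mem_toFinset_iff_odd_count_of_nodup hn₂ _)).imp_right fun hlt a b _ => hlt a b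
end

section
/- Let v be a vote on a finite set of m candidates, let 1 ≤ k ≤ m, and let h ≥ 0. Let Out be a set of h candidates each having rank(·,v) ≤ k, and let In be a set of h candidates each having rank(·,v) > k. Then there exists a vote u on the same candidates whose set of top-k candidates {c : rank(c,u) ≤ k} equals ({c : rank(c,v) ≤ k} \ Out) ∪ In and such that the number of pairs discordant between v and u is exactly Σ_{c ∈ In} rank(c,v) − Σ_{c ∈ Out} rank(c,v). -/
open Finset

/-!
Let `T` be the desired top-`k` set and let `u` arise from `v` by moving `T` to the top without
changing the order inside `T` or inside its complement. A candidate gains in rank exactly the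
number of candidates it overtakes minus the number that overtake it. Between `v` and `u` no member
of `T` is overtaken and nobody outside `T` overtakes anyone, so the number of discordant pairs is
the total rank gained by `T`. Since `T` ends up with the ranks `1, …, k`, which are the ranks of
the top-`k` candidates in `v`, this gain is the `v`-rank sum of `T` minus that of the top `k`.
-/

/-- The candidates occupying the first `k` positions of `v`. -/
def topk {C : Type*} [Fintype C] {m : ℕ} (v : Vote C m) (k : ℕ) : Finset C :=
  univ.filter fun c => rankOf v c ≤ k

/-- The candidates overtaken by `c` on the way from `v` to `u`: they beat `c` in `v` and lose
to it in `u`. Swapping the two votes gives the candidates that overtake `c`. -/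
def overtaken {C : Type*} [Fintype C] {m : ℕ} (v u : Vote C m) (c : C) : Finset C :=
  univ.filter fun a => v a < v c ∧ u c < u a

theorem card_le_of_vote {C : Type*} {m : ℕ} (v : Vote C m) (T : Finset C) : #T ≤ m :=
  (card_map v.toEmbedding).symm.trans_le (card_finset_fin_le _)

section Rank

variable {C : Type*} [Fintype C] {m : ℕ}

theorem mem_topk {v : Vote C m} {k : ℕ} {c : C} : c ∈ topk v k ↔ rankOf v c ≤ k := by
  simp only [topk, mem_filter_univ]

theorem sum_topk_eq_sum_range {M : Type*} [AddCommMonoid M] (v : Vote C m) {k : ℕ}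
    (hkm : k ≤ m) (f : ℕ → M) : ∑ c ∈ topk v k, f (rankOf v c) = ∑ i ∈ range k, f (i + 1) := by
  refine sum_nbij (fun c => (v c : ℕ)) (fun c hc => ?_)
    (Fin.val_injective.comp v.injective).injOn (fun i hi => ?_) fun _ _ => rfl
  · exact mem_range.2 (mem_topk.1 hc)
  · have hik : i < k := mem_range.1 (mem_coe.1 hi)
    refine ⟨v.symm ⟨i, hik.trans_le hkm⟩, ?_, congrArg Fin.val (v.apply_symm_apply _)⟩
    rw [mem_coe, mem_topk, rankOf, v.apply_symm_apply]
    exact hik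

theorem card_topk (v : Vote C m) {k : ℕ} (hkm : k ≤ m) : #(topk v k) = k := by
  rw [card_eq_sum_ones, sum_topk_eq_sum_range v hkm fun _ => 1, ← card_eq_sum_ones, card_range]

theorem rankOf_eq_card (v : Vote C m) (c : C) : rankOf v c = #{a | v a ≤ v c} := by
  rw [rankOf, ← Fin.card_Iic]
  exact (card_equiv v fun a => by rw [mem_filter_univ, mem_Iic]).symm

theorem rankOf_eq_card_add_card_overtaken (v u : Vote C m) (c : C) :
    rankOf v c = #{a | v a ≤ v c ∧ u a ≤ u c} + #(overtaken v u c) := by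
  have h_overtaken : overtaken v u c = ({a | v a ≤ v c ∧ ¬ u a ≤ u c} : Finset C) := by
    refine filter_congr fun a _ => ?_
    rw [not_le]
    refine and_congr_left fun hua => ⟨le_of_lt, fun hva => hva.lt_of_ne fun heq => ?_⟩
    exact hua.ne' (congrArg u (v.injective heq))
  rw [h_overtaken, rankOf_eq_card, ← filter_filter, ← filter_filter,
    card_filter_add_card_filter_not]

theorem rankOf_add_card_overtaken (v u : Vote C m) (c : C) :
    rankOf v c + #(overtaken u v c) = rankOf u c + #(overtaken v u c) := by
  rw [rankOf_eq_card_add_card_overtaken v u, rankOf_eq_card_add_card_overtaken u v,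
    add_right_comm]
  simp only [and_comm]

theorem card_discordantPairs [DecidableEq C] (v u : Vote C m) :
    #(discordantPairs v u) = ∑ c, #(overtaken v u c) := by
  simp only [discordantPairs, overtaken, card_filter, Fintype.sum_prod_type_right]

end Rank

theorem exists_vote_lt_iff {C α : Type*} [Fintype C] [LinearOrder α] {m : ℕ}
    (hm : Fintype.card C = m) (f : C → α) (hf : Function.Injective f) :
    ∃ u : Vote C m, ∀ a b, u a < u b ↔ f a < f b :=
  letI := LinearOrder.lift' f hf
  let e := Fintype.orderIsoFinOfCardEq C hm
  ⟨e.symm.toEquiv, fun _ _ => e.symm.lt_iff_lt⟩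

/-- `u` arises from `v` by moving the candidates of `T` above all others, keeping the relative
order inside `T` and inside its complement. -/
def IsPromotion {C : Type*} {m : ℕ} (T : Finset C) (v u : Vote C m) : Prop :=
  ∀ a b, u a < u b ↔ (a ∈ T ∧ b ∉ T) ∨ ((a ∈ T ↔ b ∈ T) ∧ v a < v b)

theorem exists_isPromotion {C : Type*} {m : ℕ} (T : Finset C) (v : Vote C m) :
    ∃ u, IsPromotion T v u := by
  classical
  let _ : Fintype C := .ofEquiv _ v.symm
  -- Since `false < true`, this lexicographic key places `T` first.
  have hinj : Function.Injective fun c => toLex (decide (c ∉ T), v c) := fun a b hab =>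
    v.injective (congrArg (fun p => (ofLex p).2) hab)
  have hm : Fintype.card C = m := (Fintype.card_congr v).trans (Fintype.card_fin m)
  obtain ⟨u, hu⟩ := exists_vote_lt_iff hm _ hinj
  refine ⟨u, fun a b => (hu a b).trans ?_⟩
  by_cases ha : a ∈ T <;> by_cases hb : b ∈ T <;> simp [Prod.Lex.toLex_lt_toLex, ha, hb]

namespace IsPromotion

variable {C : Type*} [Fintype C] {m : ℕ} {T : Finset C} {v u : Vote C m}

theorem topk_card (hu : IsPromotion T v u) : topk u #T = T := by
  refine (eq_of_subset_of_card_le (fun c hc => ?_) (card_topk u (card_le_of_vote u T)).le).symm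
  rw [mem_topk, rankOf_eq_card]
  refine card_le_card fun a ha => ?_
  by_contra haT
  exact ((mem_filter_univ a).1 ha).not_gt ((hu c a).2 (.inl ⟨hc, haT⟩))

theorem overtaken_symm_eq_empty (hu : IsPromotion T v u) {c : C} (hc : c ∈ T) :
    overtaken u v c = ∅ := by
  refine filter_eq_empty_iff.2 fun a _ ⟨hua, hva⟩ => ?_
  rcases (hu a c).1 hua with ⟨_, hcT⟩ | ⟨_, hva'⟩
  · exact hcT hc
  · exact hva.asymm hva'

theorem overtaken_eq_empty (hu : IsPromotion T v u) {c : C} (hc : c ∉ T) :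
    overtaken v u c = ∅ := by
  refine filter_eq_empty_iff.2 fun a _ ⟨hva, hua⟩ => ?_
  rcases (hu c a).1 hua with ⟨hcT, _⟩ | ⟨_, hva'⟩
  · exact hc hcT
  · exact hva.asymm hva'

theorem sum_rankOf_eq_add_card_discordantPairs [DecidableEq C] (hu : IsPromotion T v u) :
    ∑ c ∈ T, rankOf v c = ∑ c ∈ T, rankOf u c + #(discordantPairs v u) := by
  have hdisc : #(discordantPairs v u) = ∑ c ∈ T, #(overtaken v u c) := by
    rw [card_discordantPairs]
    exact (sum_subset T.subset_univ fun c _ hc => by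
      rw [hu.overtaken_eq_empty hc, card_empty]).symm
  rw [hdisc, ← sum_add_distrib]
  refine sum_congr rfl fun c hc => ?_
  rw [← rankOf_add_card_overtaken, hu.overtaken_symm_eq_empty hc, card_empty, add_zero]

theorem card_discordantPairs_eq_sub [DecidableEq C] (hu : IsPromotion T v u) :
    (#(discordantPairs v u) : ℤ) =
      ∑ c ∈ T, (rankOf v c : ℤ) - ∑ c ∈ topk v #T, (rankOf v c : ℤ) := by
  have hsum : ∑ c ∈ T, rankOf u c = ∑ c ∈ topk v #T, rankOf v c := by
    conv_lhs => rw [← hu.topk_card]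
    have hT : #T ≤ m := card_le_of_vote v T
    exact (sum_topk_eq_sum_range u hT id).trans (sum_topk_eq_sum_range v hT id).symm
  rw [eq_sub_iff_add_eq']
  exact_mod_cast (hsum ▸ hu.sum_rankOf_eq_add_card_discordantPairs).symm

end IsPromotion

/-- Given a vote `v` on `m` candidates, `1 ≤ k ≤ m`, a set `Out` of `h`
candidates ranked in the top `k` positions of `v` and a set `In` of `h` candidates ranked
below position `k` in `v`, there is a vote `u` whose top-`k` set is
`(top-k of v \ Out) ∪ In` such that the number of pairs discordant between `v` and `u`
is exactly `Σ_{c ∈ In} rank(c,v) − Σ_{c ∈ Out} rank(c,v)`. -/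
theorem exists_vote_with_topk_and_discordant_count
    {C : Type*} [Fintype C] [DecidableEq C] {m k h : ℕ} (v : Vote C m)
    (hk1 : 1 ≤ k) (hkm : k ≤ m)
    (Out In : Finset C) (hOutCard : Out.card = h) (hInCard : In.card = h)
    (hOut : ∀ c ∈ Out, rankOf v c ≤ k) (hIn : ∀ c ∈ In, k < rankOf v c) :
    ∃ u : Vote C m,
      (Finset.univ.filter fun c => rankOf u c ≤ k) =
        ((Finset.univ.filter fun c => rankOf v c ≤ k) \ Out) ∪ In ∧
      ((discordantPairs v u).card : ℤ) =
        (∑ c ∈ In, (rankOf v c : ℤ)) - ∑ c ∈ Out, (rankOf v c : ℤ) := by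
  have hOut_subset : Out ⊆ topk v k := fun c hc => mem_topk.2 (hOut c hc)
  have hdisj : Disjoint (topk v k \ Out) In := disjoint_left.2 fun c hc hcIn =>
    (hIn c hcIn).not_ge (mem_topk.1 (mem_sdiff.1 hc).1)
  have hcard : #((topk v k \ Out) ∪ In) = k := by
    rw [card_union_of_disjoint hdisj, hInCard, ← hOutCard,
      card_sdiff_add_card_eq_card hOut_subset, card_topk v hkm]
  obtain ⟨u, hu⟩ := exists_isPromotion ((topk v k \ Out) ∪ In) v
  have htop := hu.topk_card
  have hdisc := hu.card_discordantPairs_eq_sub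
  rw [hcard] at htop hdisc
  refine ⟨u, htop, ?_⟩
  rw [hdisc, sum_union hdisj, sum_sdiff_eq_sub hOut_subset]
  ring
end

section
/- Let v and u be votes on a finite set of m candidates and let 1 ≤ k ≤ m. Define Out = {c : rank(c,v) ≤ k and rank(c,u) > k} and In = {c : rank(c,u) ≤ k and rank(c,v) > k}. Then the number of pairs discordant between v and u is at least Σ_{c ∈ In} rank(c,v) − Σ_{c ∈ Out} rank(c,v). -/
open Finset

/-!
For every set `S` of candidates, the ranks in `v` of the members of `S` add up to `1 + ⋯ + #S` plus
the number of pairs `(a, b)` with `a ∉ S`, `b ∈ S` and `a` above `b` in `v`. If `S` is the top-`k`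
set of `u`, all of these pairs are discordant, so the rank sum of `S` exceeds that of any other set
of the same size by at most the number of discordant pairs. Taking the top-`k` set of `v` as the
other set and cancelling the candidates common to both gives the sums over `In` and `Out`.
-/

theorem sum_card_filter_lt_eq_choose {ι α : Type*} [LinearOrder α] {f : ι → α} {s : Finset ι}
    (hf : Set.InjOn f s) : ∑ b ∈ s, #{a ∈ s | f a < f b} = (#s).choose 2 := by
  classical
  induction s using Finset.induction_on_max_value f with
  | empty => simp
  | insert b s hb hmax ih =>
    have lt_b : ∀ a ∈ s, f a < f b := fun a ha =>
      (hmax a ha).lt_of_ne fun h =>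
        hb (hf (mem_insert_of_mem ha) (mem_insert_self b s) h ▸ ha)
    have below_b : #{a ∈ insert b s | f a < f b} = #s := by
      rw [filter_insert, if_neg (lt_irrefl _), filter_true_of_mem lt_b]
    have below_of_mem : ∀ c ∈ s, #{a ∈ insert b s | f a < f c} = #{a ∈ s | f a < f c} :=
      fun c hc => by rw [filter_insert, if_neg (lt_b c hc).not_gt]
    rw [sum_insert hb, below_b, sum_congr rfl below_of_mem,
      ih (hf.mono (coe_subset.2 (subset_insert b s))), card_insert_of_notMem hb,
      Nat.choose_succ_succ', Nat.choose_one_right]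

section Vote

variable {C : Type*} [Fintype C] {m : ℕ}

/-- The top-`k` set of the vote `v`. The threshold `k` may exceed the number `m` of candidates, in
which case every candidate belongs to the set. -/
def topCandidates (v : Vote C m) (k : ℕ) : Finset C := {c | rankOf v c ≤ k}

theorem mem_topCandidates {v : Vote C m} {k : ℕ} {c : C} :
    c ∈ topCandidates v k ↔ rankOf v c ≤ k := by
  simp [topCandidates]

theorem card_topCandidates (v : Vote C m) (k : ℕ) : #(topCandidates v k) = min m k := by
  rw [← Fin.card_filter_val_lt]
  exact card_equiv v fun c => by simp [mem_topCandidates, rankOf]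

theorem rankOf_eq_card_filter_lt_add_one (v : Vote C m) (c : C) :
    rankOf v c = #{a | v a < v c} + 1 := by
  have card_above : #{a | v a < v c} = #(Iio (v c)) := card_equiv v fun a => by simp
  rw [card_above, Fin.card_Iio, rankOf]

variable [DecidableEq C]

/-- The pairs `(a, b)` consisting of a candidate `a` outside `S` and a member `b` of `S` such that
`v` prefers `a` to `b`. Their number measures how far `S` is from being a top set of `v`. -/
def outsiderPairs (v : Vote C m) (S : Finset C) : Finset (C × C) :=
  {p ∈ Sᶜ ×ˢ S | v p.1 < v p.2}

theorem card_outsiderPairs (v : Vote C m) (S : Finset C) :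
    #(outsiderPairs v S) = ∑ b ∈ S, #{a ∈ Sᶜ | v a < v b} := by
  simp only [outsiderPairs, card_filter, sum_product_right]

theorem sum_rankOf_eq_choose_add_card_outsiderPairs (v : Vote C m) (S : Finset C) :
    ∑ c ∈ S, rankOf v c = (#S + 1).choose 2 + #(outsiderPairs v S) := by
  have rank_split (c : C) :
      rankOf v c = 1 + #{a ∈ S | v a < v c} + #{a ∈ Sᶜ | v a < v c} := by
    rw [rankOf_eq_card_filter_lt_add_one, ← union_compl S, filter_union,
      card_union_of_disjoint (disjoint_filter_filter disjoint_compl_right)]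
    ring
  simp only [rank_split, sum_add_distrib]
  rw [sum_card_filter_lt_eq_choose v.injective.injOn, ← card_outsiderPairs, ← card_eq_sum_ones,
    Nat.choose_succ_succ', Nat.choose_one_right]

theorem outsiderPairs_topCandidates_subset_discordantPairs (v u : Vote C m) (k : ℕ) :
    outsiderPairs v (topCandidates u k) ⊆ discordantPairs v u := by
  rintro ⟨a, b⟩ hab
  simp only [outsiderPairs, mem_filter, mem_product, mem_compl, mem_topCandidates] at hab
  obtain ⟨⟨ha, hb⟩, hv⟩ := hab
  have hu : u b < u a := by
    unfold rankOf at ha hb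
    omega
  simp [discordantPairs, hv, hu]

theorem sum_rankOf_topCandidates_le {v u : Vote C m} {k : ℕ} {T : Finset C}
    (hT : #(topCandidates u k) ≤ #T) :
    ∑ c ∈ topCandidates u k, rankOf v c ≤ ∑ c ∈ T, rankOf v c + #(discordantPairs v u) :=
  calc
    ∑ c ∈ topCandidates u k, rankOf v c
      = (#(topCandidates u k) + 1).choose 2 + #(outsiderPairs v (topCandidates u k)) :=
        sum_rankOf_eq_choose_add_card_outsiderPairs v _
    _ ≤ (#T + 1).choose 2 + #(discordantPairs v u) := by
        gcongr
        exact outsiderPairs_topCandidates_subset_discordantPairs v u k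
    _ ≤ ∑ c ∈ T, rankOf v c + #(discordantPairs v u) := by
        rw [sum_rankOf_eq_choose_add_card_outsiderPairs v T]
        gcongr
        exact Nat.le_add_right _ _

theorem topCandidates_sdiff_topCandidates (v u : Vote C m) (k : ℕ) :
    topCandidates v k \ topCandidates u k =
      ({c | rankOf v c ≤ k ∧ k < rankOf u c} : Finset C) := by
  ext c
  simp [mem_topCandidates]

end Vote

/-- For votes `v`, `u` on `m` candidates and `1 ≤ k ≤ m`, with
`Out = {c : rank(c,v) ≤ k < rank(c,u)}` and `In = {c : rank(c,u) ≤ k < rank(c,v)}`,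
the number of pairs discordant between `v` and `u` is at least
`Σ_{c ∈ In} rank(c,v) − Σ_{c ∈ Out} rank(c,v)`. -/
theorem discordant_count_lower_bound
    {C : Type*} [Fintype C] [DecidableEq C] {m k : ℕ} (v u : Vote C m)
    (hk1 : 1 ≤ k) (hkm : k ≤ m) :
    (∑ c ∈ Finset.univ.filter (fun c => rankOf u c ≤ k ∧ k < rankOf v c),
        (rankOf v c : ℤ)) -
      (∑ c ∈ Finset.univ.filter (fun c => rankOf v c ≤ k ∧ k < rankOf u c),
        (rankOf v c : ℤ)) ≤
      ((discordantPairs v u).card : ℤ) := by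
  rw [← topCandidates_sdiff_topCandidates u v, ← topCandidates_sdiff_topCandidates v u,
    sum_sdiff_sub_sum_sdiff, sub_le_iff_le_add']
  have hcard : #(topCandidates u k) = #(topCandidates v k) := by simp only [card_topCandidates]
  exact_mod_cast sum_rankOf_topCandidates_le (v := v) hcard.le
end

section
/- Let v be a vote on a finite candidate set C and let c be a function assigning to each unordered pair of distinct candidates a nonnegative integer cost. For a vote u on C, the following are equivalent: (i) u can be obtained from v by a swap sequence that transposes each unordered pair at most once and in which every transposed pair has cost 0; (ii) every pair {a,b} with c({a,b}) > 0 is ranked in the same relative order by u as by v; (iii) u is a linear extension of the transitive closure of the relation {(a,b) : a precedes b in v and c({a,b}) > 0}. -/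
open Finset

/-!
A swap sequence preserves the order of every pair it never transposes. Conversely, two distinct
votes `v`, `u` disagree on some pair that is adjacent in `v`, since otherwise `u` would be monotone
along `v`. Transposing that pair in `v` resolves this one disagreement and affects no other, so
`u` is reached by transposing each discordant pair exactly once.
-/

section LinearOrder

variable {C α : Type*} [LinearOrder α]

theorem swap_lt_swap_of_covBy {a b x y : α} (hab : a ⋖ b) (hxy : x < y)
    (hne : s(x, y) ≠ s(a, b)) : Equiv.swap a b x < Equiv.swap a b y := by
  have lt_left {z : α} (hne : z ≠ a) (hlt : z < b) : z < a := (hab.le_of_lt hlt).lt_of_ne hne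
  have right_lt {z : α} (hne : z ≠ b) (hlt : a < z) : b < z := (hab.ge_of_gt hlt).lt_of_ne' hne
  have hlt := hab.lt
  grind

theorem swap_lt_swap_iff_of_covBy_s5 {a b x y : α} (hab : a ⋖ b) (hne : s(x, y) ≠ s(a, b)) :
    Equiv.swap a b x < Equiv.swap a b y ↔ x < y := by
  refine ⟨fun h => ?_, fun h => swap_lt_swap_of_covBy hab h hne⟩
  have hne' : s(Equiv.swap a b x, Equiv.swap a b y) ≠ s(a, b) := by
    contrapose! hne
    simpa [Sym2.eq_swap] using congrArg (Sym2.map (Equiv.swap a b)) hne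
  simpa using swap_lt_swap_of_covBy hab h hne'

theorem swap_trans_lt_swap_trans_iff_of_covBy [DecidableEq C] {v : C ≃ α} {a b x y : C}
    (hab : v a ⋖ v b) (hne : s(x, y) ≠ s(a, b)) :
    (Equiv.swap a b).trans v x < (Equiv.swap a b).trans v y ↔ v x < v y := by
  have hne' : s(v x, v y) ≠ s(v a, v b) := fun h => hne (Sym2.map.injective v.injective h)
  simpa [v.injective.map_swap] using swap_lt_swap_iff_of_covBy_s5 hab hne'

theorem exists_covBy_lt_of_ne [LocallyFiniteOrder α] [WellFoundedLT α] {v u : C ≃ α}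
    (h : v ≠ u) : ∃ a b, v a ⋖ v b ∧ u b < u a := by
  contrapose! h
  have hmono : StrictMono (v.symm.trans u) :=
    (strictMono_iff_forall_covBy _).mpr fun i j hij =>
      (h _ _ (by simpa using hij)).lt_of_ne ((v.symm.trans u).injective.ne hij.ne)
  have hrefl := Subsingleton.elim (hmono.orderIsoOfSurjective _ (v.symm.trans u).surjective)
    (OrderIso.refl α)
  ext x
  simpa using (DFunLike.congr_fun hrefl (v x)).symm

theorem forall_lt_iff_lt_iff_transGen {β : Type*} [Preorder β] {v : C → α}
    (hv : Function.Injective v) (u : C → β) (S : Set (Sym2 C)) :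
    (∀ a b, s(a, b) ∈ S → (v a < v b ↔ u a < u b)) ↔
      ∀ a b, Relation.TransGen (fun x y => v x < v y ∧ s(x, y) ∈ S) a b → u a < u b := by
  constructor
  · intro h a b hab
    induction hab with
    | single hab => exact (h _ _ hab.2).mp hab.1
    | tail _ hbc ih => exact ih.trans ((h _ _ hbc.2).mp hbc.1)
  · intro h a b hab
    refine ⟨fun hlt => h a b (.single ⟨hlt, hab⟩), fun hlt => ?_⟩
    have hne : v a ≠ v b := fun he => hlt.ne (congrArg u (hv he))
    refine hne.lt_or_gt.resolve_right fun hgt => ?_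
    exact hlt.asymm (h b a (.single ⟨hgt, Sym2.eq_swap ▸ hab⟩))

end LinearOrder

section Vote

variable {C : Type*} [DecidableEq C] {m : ℕ} {v u : Vote C m}

theorem IsSwapSeq.lt_iff_lt {l : List (C × C)} (h : IsSwapSeq v l u) {x y : C}
    (hxy : s(x, y) ∉ l.map fun p => s(p.1, p.2)) : v x < v y ↔ u x < u y := by
  induction h with
  | nil => rfl
  | cons v a b l u hadj _ ih =>
    rw [List.map_cons, List.mem_cons, not_or] at hxy
    have hcov : v a ⋖ v b := by simpa [Nat.covBy_iff_add_one_eq] using hadj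
    exact (swap_trans_lt_swap_trans_iff_of_covBy hcov hxy.1).symm.trans (ih hxy.2)

variable [Fintype C]

@[simp]
theorem mem_discordantPairs {p : C × C} :
    p ∈ discordantPairs v u ↔ v p.1 < v p.2 ∧ u p.2 < u p.1 := by
  simp [discordantPairs]

theorem injOn_sym2_discordantPairs (v u : Vote C m) :
    Set.InjOn (fun p : C × C => s(p.1, p.2)) (discordantPairs v u) := by
  rintro ⟨a, b⟩ hab ⟨x, y⟩ hxy h
  rcases Sym2.eq_iff.mp h with ⟨rfl, rfl⟩ | ⟨rfl, rfl⟩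
  · rfl
  · exact absurd (mem_discordantPairs.mp hxy).1 (mem_discordantPairs.mp hab).1.asymm

theorem discordantPairs_swap_trans {a b : C} (hv : v a ⋖ v b) (hu : u b < u a) :
    discordantPairs ((Equiv.swap a b).trans v) u = (discordantPairs v u).erase (a, b) := by
  ext ⟨x, y⟩
  by_cases h : s(x, y) = s(a, b)
  · rcases Sym2.eq_iff.mp h with ⟨rfl, rfl⟩ | ⟨rfl, rfl⟩
    · simp [hv.lt.le]
    · simp [hv.lt.not_gt, hu.not_gt]
  · have hne : (x, y) ≠ (a, b) := fun he => h (congrArg (fun p : C × C => s(p.1, p.2)) he)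
    rw [mem_erase, mem_discordantPairs, mem_discordantPairs,
      swap_trans_lt_swap_trans_iff_of_covBy hv h]
    exact (and_iff_right hne).symm

theorem exists_isSwapSeq_toFinset_eq_discordantPairs (v u : Vote C m) :
    ∃ l, IsSwapSeq v l u ∧ l.Nodup ∧ l.toFinset = discordantPairs v u := by
  induction hD : discordantPairs v u using Finset.strongInduction generalizing v with
  | H D ih =>
    subst hD
    obtain rfl | hne := eq_or_ne v u
    · refine ⟨[], .nil v, List.nodup_nil, ?_⟩
      ext p
      simpa using fun h : v p.1 < v p.2 => h.le
    obtain ⟨a, b, hv, hu⟩ := exists_covBy_lt_of_ne hne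
    have hmem : (a, b) ∈ discordantPairs v u := mem_discordantPairs.mpr ⟨hv.lt, hu⟩
    have hswap := discordantPairs_swap_trans hv hu
    obtain ⟨l, hl, hnodup, hset⟩ := ih _ (erase_ssubset hmem) _ hswap
    have hnotMem : (a, b) ∉ l := by simp [← List.mem_toFinset, hset]
    have hadj : (v a : ℕ) + 1 = v b := by simpa [Nat.covBy_iff_add_one_eq] using hv
    exact ⟨(a, b) :: l, .cons v a b l u hadj hl, hnodup.cons hnotMem, by
      rw [List.toFinset_cons, hset, insert_erase hmem]⟩

end Vote

theorem zero_cost_bribery_iff_possible_winner_extension_general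
    {C : Type*} [DecidableEq C] {m : ℕ} (v u : Vote C m) (S : Set (Sym2 C)) :
    ((∃ l : List (C × C), IsSwapSeq v l u ∧
        (l.map fun p => s(p.1, p.2)).Nodup ∧
        ∀ p ∈ l, s(p.1, p.2) ∉ S) ↔
      (∀ a b : C, s(a, b) ∈ S → (v a < v b ↔ u a < u b))) ∧
    ((∀ a b : C, s(a, b) ∈ S → (v a < v b ↔ u a < u b)) ↔
      (∀ a b : C,
        Relation.TransGen (fun x y => v x < v y ∧ s(x, y) ∈ S) a b → u a < u b)) := by
  refine ⟨⟨?_, fun h => ?_⟩, forall_lt_iff_lt_iff_transGen v.injective u S⟩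
  · rintro ⟨l, hl, -, hS⟩ a b hab
    refine hl.lt_iff_lt fun hmem => ?_
    obtain ⟨p, hp, hpab⟩ := List.mem_map.mp hmem
    exact hS p hp (hpab ▸ hab)
  · have : Fintype C := .ofEquiv _ v.symm
    obtain ⟨l, hl, hnodup, hset⟩ := exists_isSwapSeq_toFinset_eq_discordantPairs v u
    have hdisc {p : C × C} (hp : p ∈ l) : p ∈ discordantPairs v u :=
      hset ▸ List.mem_toFinset.mpr hp
    refine ⟨l, hl, hnodup.map_on fun p hp q hq hpq =>
      injOn_sym2_discordantPairs v u (hdisc hp) (hdisc hq) hpq, fun p hp hpS => ?_⟩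
    obtain ⟨hv, hu⟩ := mem_discordantPairs.mp (hdisc hp)
    exact hu.asymm ((h p.1 p.2 hpS).mp hv)

/-- For votes `v`, `u` on a finite candidate set and a cost function
`c` on unordered pairs, the following are equivalent:
(i) `u` is reachable from `v` by a swap sequence transposing each unordered pair at most
once, all of whose transposed pairs have cost `0`;
(ii) every pair of positive cost is ranked in the same relative order by `u` as by `v`;
(iii) `u` is a linear extension of the transitive closure of the relation
`{(a,b) : a precedes b in v and c({a,b}) > 0}`. -/
theorem zero_cost_bribery_iff_possible_winner_extension
    {C : Type*} [Fintype C] [DecidableEq C] {m : ℕ} (v u : Vote C m)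
    (c : Sym2 C → ℕ) :
    ((∃ l : List (C × C), IsSwapSeq v l u ∧
        (l.map fun p => s(p.1, p.2)).Nodup ∧
        ∀ p ∈ l, c s(p.1, p.2) = 0) ↔
      (∀ a b : C, 0 < c s(a, b) → (v a < v b ↔ u a < u b))) ∧
    ((∀ a b : C, 0 < c s(a, b) → (v a < v b ↔ u a < u b)) ↔
      (∀ a b : C,
        Relation.TransGen (fun x y => v x < v y ∧ 0 < c s(x, y)) a b → u a < u b)) := by
  simpa using zero_cost_bribery_iff_possible_winner_extension_general v u {e | 0 < c e}
end

section
/- Let G be an undirected graph on vertices x_1,…,x_N with N ≥ 2 and let 1 ≤ k ≤ N; construct the single-vote Swap Bribery instance (C, w, cost) as described. Then for all indices 1 ≤ i_1 < … < i_k ≤ N, the minimum, over all votes u on C satisfying rank(p,u) = k+1 and {c : rank(c,u) ≤ k} = {c_{i_1},…,c_{i_k}}, of the total cost Σ cost({a,b}) taken over all pairs {a,b} discordant between w and u, equals (N−k)·N² + k·N − |{(h,j) : 1 ≤ h < j ≤ k and x_{i_h} x_{i_j} ∈ E(G)}|. -/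
open Finset

/-- The candidate set of the single-vote Swap Bribery instance constructed from a graph
on `N` vertices and a parameter `k`: dummies `d_1, …, d_{k+1}` (the summand `Fin (k+1)`),
the vertex candidates `c_1, …, c_N` (the summand `Fin N`), and the preferred candidate
`p` (the summand `Fin 1`); in total `N + k + 2` candidates. -/
abbrev BriberyCand (N k : ℕ) := Fin (k + 1) ⊕ (Fin N ⊕ Fin 1)

/-- The dummy candidate `d_j` (for `j : Fin (k+1)`). -/
abbrev BriberyCand.d {N k : ℕ} (j : Fin (k + 1)) : BriberyCand N k := Sum.inl j

/-- The vertex candidate `c_i` (for `i : Fin N`). -/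
abbrev BriberyCand.c {N k : ℕ} (i : Fin N) : BriberyCand N k := Sum.inr (Sum.inl i)

/-- The preferred candidate `p`. -/
abbrev BriberyCand.p {N k : ℕ} : BriberyCand N k := Sum.inr (Sum.inr 0)

/-- The single vote `w : d_1 ≻ … ≻ d_{k+1} ≻ c_1 ≻ … ≻ c_N ≻ p` of the constructed
Swap Bribery instance. -/
def briberyVote (N k : ℕ) : Vote (BriberyCand N k) ((k + 1) + (N + 1)) :=
  (Equiv.sumCongr (Equiv.refl (Fin (k + 1))) finSumFinEquiv).trans finSumFinEquiv

/-- The cost function of the constructed Swap Bribery instance, as a symmetric function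
of the two members of the swapped pair: swapping `c_i` and `c_j` costs `1` if `x_i x_j`
is an edge of `G` and `0` otherwise; swapping `d_1` and `c_i` costs
`N − |{j < i : x_j x_i ∈ E(G)}|`; swapping `c_i` and `p` costs `N²`; every other swap
costs `0`. -/
def briberyCost {N : ℕ} (G : SimpleGraph (Fin N)) [DecidableRel G.Adj] (k : ℕ) :
    BriberyCand N k → BriberyCand N k → ℕ
  | Sum.inr (Sum.inl i), Sum.inr (Sum.inl j) => if G.Adj i j then 1 else 0
  | Sum.inl d, Sum.inr (Sum.inl i) =>
      if d = 0 then N - (Finset.univ.filter fun j => j < i ∧ G.Adj j i).card else 0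
  | Sum.inr (Sum.inl i), Sum.inl d =>
      if d = 0 then N - (Finset.univ.filter fun j => j < i ∧ G.Adj j i).card else 0
  | Sum.inr (Sum.inl _), Sum.inr (Sum.inr _) => N ^ 2
  | Sum.inr (Sum.inr _), Sum.inr (Sum.inl _) => N ^ 2
  | _, _ => 0

/-! To rank a set `A` of candidates on top and `p` right below it, bring `A` to the top, then `p`,
and keep the original order inside each of the blocks `A`, `{p}` and the rest. The pairs discordant
with the original vote are then exactly those whose order must be reversed in *every* vote with top
block `A` followed by `p`, so for nonnegative costs this vote is optimal.

In the bribery instance, a selected vertex `j` with `e` earlier neighbours pays `N - e` for passing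
`d₁` and `1` for each unselected earlier neighbour, hence `N` minus the number of its selected
earlier neighbours; each unselected vertex pays `N²` for being passed by `p`. -/

namespace Vote

variable {C : Type*} {m : ℕ}

lemma val_eq_card_lt [Fintype C] (u : Vote C m) (a : C) : (u a : ℕ) = #{b | u b < u a} := by
  rw [← Fin.card_Iio]
  exact (card_equiv u (by simp)).symm

lemma exists_lt_iff_key_lt {α : Type*} [LinearOrder α] [Fintype C] (hm : Fintype.card C = m)
    {key : C → α} (hkey : Function.Injective key) :
    ∃ u : Vote C m, ∀ a b, u a < u b ↔ key a < key b := by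
  let _ : LinearOrder C := LinearOrder.lift' key hkey
  let e := (Fintype.orderIsoFinOfCardEq C hm).symm
  exact ⟨e.toEquiv, fun _ _ => e.lt_iff_lt⟩

section Tiers

variable {α : Type*} [LinearOrder α]

/-- The vote `u` is a linear extension of the weak order in which candidates of smaller tier are
preferred. -/
def Refines (u : Vote C m) (tier : C → α) : Prop :=
  ∀ ⦃a b⦄, tier a < tier b → u a < u b

variable [Fintype C]

/-- The pairs, oriented as in `v`, that are discordant between `v` and every vote refining
`tier`. -/
def forcedPairs (v : Vote C m) (tier : C → α) : Finset (C × C) :=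
  {q | v q.1 < v q.2 ∧ tier q.2 < tier q.1}

variable [DecidableEq C]

lemma Refines.forcedPairs_subset {u : Vote C m} {tier : C → α} (hu : u.Refines tier)
    (v : Vote C m) : v.forcedPairs tier ⊆ discordantPairs v u :=
  monotone_filter_right _ fun _ _ hq => ⟨hq.1, hu hq.2⟩

-- Sort the candidates by tier, breaking ties by their position in `v`.
lemma exists_refines_discordantPairs_eq (v : Vote C m) (tier : C → α) :
    ∃ u : Vote C m, u.Refines tier ∧ discordantPairs v u = v.forcedPairs tier := by
  have hkey : Function.Injective fun c => toLex (tier c, v c) := fun a b h =>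
    v.injective (congrArg Prod.snd (toLex.injective h))
  have hm : Fintype.card C = m := (Fintype.card_congr v).trans (Fintype.card_fin m)
  obtain ⟨u, hu⟩ := exists_lt_iff_key_lt hm hkey
  simp only [Prod.Lex.toLex_lt_toLex] at hu
  refine ⟨u, fun a b h => (hu a b).2 (.inl h), filter_congr fun q _ => ?_⟩
  refine and_congr_right fun hv => ?_
  rw [hu, or_iff_left fun h => h.2.asymm hv]

theorem isLeast_sum_discordantPairs {M : Type*} [AddCommMonoid M] [PartialOrder M]
    [IsOrderedAddMonoid M] [CanonicallyOrderedAdd M]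
    (v : Vote C m) (tier : C → α) (cost : C × C → M) :
    IsLeast {t | ∃ u : Vote C m, u.Refines tier ∧ t = ∑ q ∈ discordantPairs v u, cost q}
      (∑ q ∈ v.forcedPairs tier, cost q) := by
  constructor
  · obtain ⟨u, hu, hvu⟩ := exists_refines_discordantPairs_eq v tier
    exact ⟨u, hu, by rw [hvu]⟩
  · rintro _ ⟨u, hu, rfl⟩
    exact sum_le_sum_of_subset (hu.forcedPairs_subset v)

end Tiers

section Promotion

variable [DecidableEq C] {A : Finset C} {p : C}

/-- The tiers of the votes that rank the candidates of `A` first, `p` next, and all others last. -/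
def promotionTier (A : Finset C) (p c : C) : ℕ :=
  if c ∈ A then 0 else if c = p then 1 else 2

lemma promotionTier_lt_promotionTier_iff (hp : p ∉ A) (a b : C) :
    promotionTier A p a < promotionTier A p b ↔ b ∉ A ∧ (a ∈ A ∨ a = p ∧ b ≠ p) := by
  unfold promotionTier
  split_ifs <;> simp_all

theorem refines_promotionTier_iff (u : Vote C m) (hp : p ∉ A) :
    u.Refines (promotionTier A p) ↔
      rankOf u p = #A + 1 ∧ ∀ c, rankOf u c ≤ #A ↔ c ∈ A := by
  have := Fintype.ofEquiv _ u.symm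
  simp only [Refines, promotionTier_lt_promotionTier_iff hp, rankOf, Nat.add_right_cancel_iff,
    Nat.add_one_le_iff]
  constructor
  · intro hu
    have lt_p_iff (c : C) : u c < u p ↔ c ∈ A := by
      refine ⟨fun hc => ?_, fun hc => hu ⟨hp, .inl hc⟩⟩
      by_contra hcA
      exact hc.asymm (hu ⟨hcA, .inr ⟨rfl, by rintro rfl; exact hc.false⟩⟩)
    have val_p : (u p : ℕ) = #A := by simp [val_eq_card_lt, lt_p_iff]
    exact ⟨val_p, fun c => by rw [← val_p, ← lt_p_iff, Fin.lt_def]⟩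
  · rintro ⟨val_p, lt_card_iff⟩ a b ⟨hb, hab⟩
    have card_le : #A ≤ u b := not_lt.1 (mt (lt_card_iff b).1 hb)
    obtain ha | ⟨rfl, hba⟩ := hab
    · exact ((lt_card_iff a).2 ha).trans_le card_le
    · exact lt_of_le_of_ne (val_p.trans_le card_le) (u.injective.ne hba.symm)

end Promotion

end Vote

section EarlierNeighbors

variable {V : Type*} [Fintype V] (G : SimpleGraph V) [DecidableRel G.Adj]

/-- The neighbours of `j` in `G` that precede `j` in the order of the vertices. -/
def earlierNeighbors [LT V] [DecidableLT V] (j : V) : Finset V :=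
  {i | i < j ∧ G.Adj i j}

lemma sum_card_sub_earlierNeighbors_add [LT V] [DecidableLT V] [DecidableEq V] (S : Finset V) :
    ∑ j ∈ S, (Fintype.card V - #(earlierNeighbors G j)) + ∑ j ∈ S, #(earlierNeighbors G j \ S) +
      ∑ j ∈ S, #(earlierNeighbors G j ∩ S) = #S * Fintype.card V := by
  rw [← sum_add_distrib, ← sum_add_distrib]
  refine sum_const_nat fun j _ => ?_
  rw [add_assoc, card_sdiff_add_card_inter, Nat.sub_add_cancel (card_le_univ _)]

lemma sum_ite_adj_eq_sum_card_earlierNeighbors_sdiff [LT V] [DecidableLT V] [DecidableEq V]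
    (S : Finset V) :
    ∑ i, ∑ j, (if i < j ∧ j ∈ S ∧ i ∉ S then if G.Adj i j then 1 else 0 else 0) =
      ∑ j ∈ S, #(earlierNeighbors G j \ S) := by
  have card_sdiff_eq (j : V) : #(earlierNeighbors G j \ S) =
      ∑ i, if i < j ∧ i ∉ S ∧ G.Adj i j then 1 else 0 := by
    rw [← card_filter, earlierNeighbors, sdiff_eq_filter, filter_filter]
    simp only [and_right_comm, and_assoc]
  rw [sum_comm, ← univ_inter S, ← sum_ite_mem]
  refine sum_congr rfl fun j _ => ?_
  split_ifs with hj <;> simp [hj, card_sdiff_eq, ← ite_and, and_assoc]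

lemma sum_card_earlierNeighbors_inter_map {ι : Type*} [Fintype ι] [LinearOrder ι] [LinearOrder V]
    (σ : ι ↪o V) :
    ∑ j ∈ univ.map σ.toEmbedding, #(earlierNeighbors G j ∩ univ.map σ.toEmbedding) =
      #{q : ι × ι | q.1 < q.2 ∧ G.Adj (σ q.1) (σ q.2)} := by
  have inter_map (j : ι) : earlierNeighbors G (σ j) ∩ univ.map σ.toEmbedding =
      ({i | i < j ∧ G.Adj (σ i) (σ j)} : Finset ι).map σ.toEmbedding := by
    ext x
    simp only [earlierNeighbors, mem_inter, mem_filter, mem_map, mem_univ, true_and]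
    constructor
    · rintro ⟨hx, i, rfl⟩
      exact ⟨i, by simpa using hx, rfl⟩
    · rintro ⟨i, hi, rfl⟩
      exact ⟨by simpa using hi, i, rfl⟩
  simp only [sum_map, RelEmbedding.coe_toEmbedding, inter_map, card_map]
  simp only [card_filter, Fintype.sum_prod_type_right]

end EarlierNeighbors

section BriberyInstance

variable {N k m : ℕ}

lemma briberyVote_d_lt_c (d : Fin (k + 1)) (i : Fin N) :
    briberyVote N k (.d d) < briberyVote N k (.c i) := by
  have hd : (d : ℕ) < k + 1 + i := by omega
  simpa [briberyVote, Fin.lt_def, -Fin.val_fin_lt] using hd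

lemma briberyVote_c_lt_c_iff (i j : Fin N) :
    briberyVote N k (.c i) < briberyVote N k (.c j) ↔ i < j := by
  simp [briberyVote, Fin.lt_def, -Fin.val_fin_lt]

lemma briberyVote_c_lt_p (i : Fin N) : briberyVote N k (.c i) < briberyVote N k .p := by
  simp [briberyVote, Fin.lt_def, -Fin.val_fin_lt]

/-- The candidates `c i` of the selected vertices `i ∈ S`. -/
def selectedCandidates (k : ℕ) (S : Finset (Fin N)) : Finset (BriberyCand N k) :=
  S.map ⟨BriberyCand.c, Sum.inr_injective.comp Sum.inl_injective⟩

lemma mem_selectedCandidates {S : Finset (Fin N)} {x : BriberyCand N k} :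
    x ∈ selectedCandidates k S ↔ ∃ i ∈ S, x = .c i := by
  simp [selectedCandidates, eq_comm]

lemma card_selectedCandidates (S : Finset (Fin N)) : #(selectedCandidates k S) = #S :=
  card_map _

/-- The tiers of the votes that rank the selected candidates first, `p` next, and all others
last. -/
def selectionTier (k : ℕ) (S : Finset (Fin N)) : BriberyCand N k → ℕ :=
  Vote.promotionTier (selectedCandidates k S) .p

lemma refines_selectionTier_iff (u : Vote (BriberyCand N k) m) (S : Finset (Fin N)) :
    u.Refines (selectionTier k S) ↔
      rankOf u .p = #S + 1 ∧ ∀ x, rankOf u x ≤ #S ↔ ∃ i ∈ S, x = .c i := by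
  rw [selectionTier, Vote.refines_promotionTier_iff u (by simp [mem_selectedCandidates])]
  simp only [card_selectedCandidates, mem_selectedCandidates]

lemma selectionTier_d (S : Finset (Fin N)) (d : Fin (k + 1)) : selectionTier k S (.d d) = 2 := by
  simp [selectionTier, Vote.promotionTier, mem_selectedCandidates]

lemma selectionTier_c (S : Finset (Fin N)) (i : Fin N) :
    selectionTier k S (.c i) = if i ∈ S then 0 else 2 := by
  simp [selectionTier, Vote.promotionTier, mem_selectedCandidates]

lemma selectionTier_p (S : Finset (Fin N)) : selectionTier k S .p = 1 := by
  simp [selectionTier, Vote.promotionTier, mem_selectedCandidates]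

lemma selectionTier_c_lt_d_iff (S : Finset (Fin N)) (i : Fin N) (d : Fin (k + 1)) :
    selectionTier k S (.c i) < selectionTier k S (.d d) ↔ i ∈ S := by
  simp [selectionTier_c, selectionTier_d, apply_ite (· < 2)]

lemma selectionTier_c_lt_c_iff (S : Finset (Fin N)) (i j : Fin N) :
    selectionTier k S (.c j) < selectionTier k S (.c i) ↔ j ∈ S ∧ i ∉ S := by
  simp only [selectionTier_c]
  split_ifs <;> simp_all

lemma selectionTier_p_lt_c_iff (S : Finset (Fin N)) (i : Fin N) :
    selectionTier k S .p < selectionTier k S (.c i) ↔ i ∉ S := by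
  simp only [selectionTier_c, selectionTier_p]
  split_ifs <;> simp_all

variable (G : SimpleGraph (Fin N)) [DecidableRel G.Adj]

lemma sum_briberyCost_forcedPairs (S : Finset (Fin N)) :
    ∑ q ∈ (briberyVote N k).forcedPairs (selectionTier k S), briberyCost G k q.1 q.2 =
      ∑ i ∈ S, (N - #(earlierNeighbors G i)) + ∑ j ∈ S, #(earlierNeighbors G j \ S) +
        ∑ _i ∈ Sᶜ, N ^ 2 := by
  have dummy_cost : ∑ d : Fin (k + 1), ∑ i, (if i ∈ S then
      if d = 0 then N - #{j | j < i ∧ G.Adj j i} else 0 else 0) =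
        ∑ i ∈ S, (N - #(earlierNeighbors G i)) := by
    rw [sum_comm]
    simp [earlierNeighbors, sum_ite_mem]
  have preferred_cost : ∑ i, (if i ∉ S then N ^ 2 else 0) = ∑ _i ∈ Sᶜ, N ^ 2 := by
    simp only [← mem_compl, sum_ite_mem, univ_inter]
  rw [Vote.forcedPairs, sum_filter, Fintype.sum_prod_type, ← dummy_cost,
    ← sum_ite_adj_eq_sum_card_earlierNeighbors_sdiff, ← preferred_cost]
  -- Only pairs `(d₁, cᵢ)`, `(cᵢ, cⱼ)` and `(cᵢ, p)` are both forced and costly.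
  simp only [Fintype.sum_sum_type, univ_unique, sum_singleton, Fin.default_eq_zero, briberyCost,
    selectionTier_c_lt_d_iff, selectionTier_c_lt_c_iff, selectionTier_p_lt_c_iff,
    briberyVote_d_lt_c, briberyVote_c_lt_c_iff, briberyVote_c_lt_p, (briberyVote_d_lt_c _ _).not_gt,
    (briberyVote_c_lt_p _).not_gt, true_and, false_and, ite_self, if_false, sum_const_zero,
    zero_add, add_zero, sum_add_distrib]

theorem sum_briberyCost_forcedPairs_eq (S : Finset (Fin N)) :
    ∑ q ∈ (briberyVote N k).forcedPairs (selectionTier k S), briberyCost G k q.1 q.2 =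
      (N - #S) * N ^ 2 + #S * N - ∑ j ∈ S, #(earlierNeighbors G j ∩ S) := by
  have h := sum_card_sub_earlierNeighbors_add G S
  rw [Fintype.card_fin] at h
  rw [sum_briberyCost_forcedPairs, sum_const, card_compl, Fintype.card_fin, smul_eq_mul, ← h]
  omega

end BriberyInstance

/-- In the Swap Bribery instance constructed from a graph `G` on `N ≥ 2`
vertices and `1 ≤ k ≤ N`, for any selection `x_{i_1}, …, x_{i_k}` of `k` vertices (given
by a strictly increasing `σ : Fin k → Fin N`), the minimum — over all votes `u` with
`rank(p,u) = k+1` whose top-`k` candidates are exactly `c_{i_1}, …, c_{i_k}` — of the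
total cost of the pairs discordant between `w` and `u` equals
`(N−k)·N² + k·N − |{(h,j) : h < j, x_{i_h} x_{i_j} ∈ E(G)}|`. -/
theorem min_bribery_cost_of_selection
    {N k : ℕ} (hN : 2 ≤ N) (hk1 : 1 ≤ k) (hkN : k ≤ N)
    (G : SimpleGraph (Fin N)) [DecidableRel G.Adj]
    (σ : Fin k → Fin N) (hσ : StrictMono σ) :
    IsLeast
      { t : ℕ | ∃ u : Vote (BriberyCand N k) ((k + 1) + (N + 1)),
          rankOf u BriberyCand.p = k + 1 ∧
          (∀ c : BriberyCand N k,
            rankOf u c ≤ k ↔ ∃ j : Fin k, c = BriberyCand.c (σ j)) ∧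
          t = ∑ q ∈ discordantPairs (briberyVote N k) u, briberyCost G k q.1 q.2 }
      ((N - k) * N ^ 2 + k * N -
        ((Finset.univ : Finset (Fin k × Fin k)).filter
          fun q => q.1 < q.2 ∧ G.Adj (σ q.1) (σ q.2)).card) := by
  let S : Finset (Fin N) := univ.map (OrderEmbedding.ofStrictMono σ hσ).toEmbedding
  have card_S : #S = k := by simp [S]
  have refines_iff (u : Vote (BriberyCand N k) ((k + 1) + (N + 1))) :
      u.Refines (selectionTier k S) ↔ rankOf u BriberyCand.p = k + 1 ∧
        ∀ c, rankOf u c ≤ k ↔ ∃ j, c = BriberyCand.c (σ j) := by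
    simp [refines_selectionTier_iff, card_S, S, -Sum.forall]
  have h := Vote.isLeast_sum_discordantPairs (briberyVote N k) (selectionTier k S)
    fun q => briberyCost G k q.1 q.2
  rw [sum_briberyCost_forcedPairs_eq, card_S, sum_card_earlierNeighbors_inter_map] at h
  simp only [refines_iff, and_assoc] at h
  exact h
end

section
/- Let v_1,…,v_n be votes on a finite set of m candidates, let 1 ≤ k ≤ m, and let u_1,…,u_n be votes such that for each i the number of pairs discordant between v_i and u_i is at most β_i, where Σ_i β_i ≤ β. Then every candidate whose total k-approval score in (u_1,…,u_n) differs from its total k-approval score in (v_1,…,v_n) belongs to the set ∪_{i=1}^{n} {c : k − β + 1 ≤ rank(c,v_i) ≤ k + β}; in particular, at most 2βn candidates can have a different total score after the bribery. -/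
open Finset

/-!
If candidate `c` moves down from `v` to `u`, then every candidate that overtakes it forms a
discordant pair with it, so `c` is displaced by at most the number of discordant pairs. A vote
whose approval of `c` changes therefore ranks `c` within that distance of the boundary between
positions `k` and `k + 1`, and a change of total score forces a change of approval in some vote.
-/

section Displacement

variable {C : Type*} [Fintype C] {m : ℕ}

theorem card_filter_lt_eq_position (v : Vote C m) (c : C) : #{d | v d < v c} = (v c : ℕ) := by
  rw [← Fin.card_Iio (v c)]
  exact card_equiv v (by simp)

variable [DecidableEq C]

theorem card_discordantPairs_comm (v u : Vote C m) :
    #(discordantPairs v u) = #(discordantPairs u v) :=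
  card_equiv (Equiv.prodComm C C) (by simp [discordantPairs, and_comm])

theorem rankOf_le_rankOf_add_card_discordantPairs (v u : Vote C m) (c : C) :
    rankOf u c ≤ rankOf v c + #(discordantPairs v u) := by
  have overtaking_subset : ({d | u d < u c} : Finset C) ⊆
      ({d | v d < v c} : Finset C) ∪ (discordantPairs v u).image Prod.snd := by
    intro d hd
    have hu : u d < u c := by simpa using hd
    have hdc : v d ≠ v c := fun h => hu.ne (congrArg u (v.injective h))
    rcases hdc.lt_or_gt with hv | hv
    · exact mem_union_left _ (by simpa using hv)
    · exact mem_union_right _ (mem_image.mpr ⟨(c, d), by simp [discordantPairs, hv, hu], rfl⟩)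
  have position_le : (u c : ℕ) ≤ v c + #(discordantPairs v u) :=
    calc (u c : ℕ) = #{d | u d < u c} := (card_filter_lt_eq_position u c).symm
      _ ≤ #{d | v d < v c} + #((discordantPairs v u).image Prod.snd) :=
        (card_le_card overtaking_subset).trans (card_union_le _ _)
      _ ≤ v c + #(discordantPairs v u) :=
        add_le_add (card_filter_lt_eq_position v c).le card_image_le
  unfold rankOf
  omega

end Displacement

section ApprovalWindow

variable {C : Type*} {m : ℕ}

theorem rankOf_injective (v : Vote C m) : Function.Injective (rankOf v) :=
  (Nat.succ_injective.comp Fin.val_injective).comp v.injective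

variable [Fintype C]

/-- The candidates `c` with `k - r + 1 ≤ rank(c, v) ≤ k + r`, i.e. those among the `r` positions
on either side of the `k`-approval boundary. The lower bound is written without subtraction, which
truncates in `ℕ`. -/
def approvalWindow (v : Vote C m) (k r : ℕ) : Finset C :=
  {c | k < rankOf v c + r ∧ rankOf v c ≤ k + r}

theorem mem_approvalWindow {v : Vote C m} {k r : ℕ} {c : C} :
    c ∈ approvalWindow v k r ↔ k < rankOf v c + r ∧ rankOf v c ≤ k + r := by
  simp [approvalWindow]

theorem card_approvalWindow_le (v : Vote C m) (k r : ℕ) : #(approvalWindow v k r) ≤ 2 * r := by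
  have rank_mapsTo : Set.MapsTo (rankOf v) (approvalWindow v k r) (Ioc (k - r) (k + r)) := by
    intro c hc
    have rank_pos : 0 < rankOf v c := Nat.succ_pos _
    rw [mem_coe, mem_approvalWindow] at hc
    rw [mem_coe, mem_Ioc]
    omega
  calc #(approvalWindow v k r) ≤ #(Ioc (k - r) (k + r)) :=
        card_le_card_of_injOn (rankOf v) rank_mapsTo (rankOf_injective v).injOn
    _ = k + r - (k - r) := Nat.card_Ioc _ _
    _ ≤ 2 * r := by omega

theorem mem_approvalWindow_of_not_approval_iff [DecidableEq C] {v u : Vote C m} {k : ℕ} {c : C}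
    (h : ¬(rankOf u c ≤ k ↔ rankOf v c ≤ k)) :
    c ∈ approvalWindow v k #(discordantPairs v u) := by
  have hvu := rankOf_le_rankOf_add_card_discordantPairs v u c
  have huv := rankOf_le_rankOf_add_card_discordantPairs u v c
  rw [card_discordantPairs_comm u v] at huv
  rw [mem_approvalWindow]
  omega

end ApprovalWindow

section ApprovalScore

variable {ι C : Type*} [Fintype ι] {m : ℕ}

/-- The total `k`-approval score of `c` in the tuple of votes `v`. -/
def approvalScore (k : ℕ) (v : ι → Vote C m) (c : C) : ℕ :=
  #{i | rankOf (v i) c ≤ k}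

theorem exists_not_approval_iff_of_approvalScore_ne {k : ℕ} {v u : ι → Vote C m} {c : C}
    (h : approvalScore k u c ≠ approvalScore k v c) :
    ∃ i, ¬(rankOf (u i) c ≤ k ↔ rankOf (v i) c ≤ k) := by
  contrapose! h
  exact congrArg card (filter_congr fun i _ => h i)

theorem changed_score_candidates_localized_general [Fintype C] [DecidableEq C] (k : ℕ)
    (v u : ι → Vote C m) :
    (∀ c, approvalScore k u c ≠ approvalScore k v c →
        ∃ i, c ∈ approvalWindow (v i) k #(discordantPairs (v i) (u i))) ∧
      #{c | approvalScore k u c ≠ approvalScore k v c} ≤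
        2 * ∑ i, #(discordantPairs (v i) (u i)) := by
  let window (i : ι) : Finset C := approvalWindow (v i) k #(discordantPairs (v i) (u i))
  have localized (c : C) (hc : approvalScore k u c ≠ approvalScore k v c) : ∃ i, c ∈ window i :=
    (exists_not_approval_iff_of_approvalScore_ne hc).imp fun _ =>
      mem_approvalWindow_of_not_approval_iff
  have changed_subset :
      ({c | approvalScore k u c ≠ approvalScore k v c} : Finset C) ⊆ univ.biUnion window := by
    intro c hc
    simpa using localized c (by simpa using hc)
  refine ⟨localized, ?_⟩
  calc #{c | approvalScore k u c ≠ approvalScore k v c}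
      ≤ ∑ i, #(window i) := (card_le_card changed_subset).trans card_biUnion_le
    _ ≤ ∑ i, 2 * #(discordantPairs (v i) (u i)) :=
        sum_le_sum fun i _ => card_approvalWindow_le (v i) k _
    _ = 2 * ∑ i, #(discordantPairs (v i) (u i)) := (mul_sum _ _ _).symm

end ApprovalScore

/-- Let `v_1, …, v_n` and `u_1, …, u_n` be votes on `m` candidates with
`1 ≤ k ≤ m`, such that the number of pairs discordant between `v_i` and `u_i` is at most
`β_i` with `Σ_i β_i ≤ β`. Then every candidate whose total `k`-approval score changes
belongs to `∪_i {c : k − β + 1 ≤ rank(c,v_i) ≤ k + β}`; in particular at most `2βn`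
candidates can have a different total score after the bribery. -/
theorem changed_score_candidates_localized
    {C : Type*} [Fintype C] [DecidableEq C] {m k n β : ℕ}
    (v u : Fin n → Vote C m) (βi : Fin n → ℕ)
    (hdis : ∀ i, (discordantPairs (v i) (u i)).card ≤ βi i)
    (hsum : ∑ i, βi i ≤ β) (hk1 : 1 ≤ k) (hkm : k ≤ m) :
    (∀ c : C,
      (Finset.univ.filter fun i => rankOf (u i) c ≤ k).card ≠
          (Finset.univ.filter fun i => rankOf (v i) c ≤ k).card →
        ∃ i : Fin n, (k : ℤ) - (β : ℤ) + 1 ≤ (rankOf (v i) c : ℤ) ∧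
          (rankOf (v i) c : ℤ) ≤ (k : ℤ) + (β : ℤ)) ∧
    (Finset.univ.filter fun c : C =>
        (Finset.univ.filter fun i => rankOf (u i) c ≤ k).card ≠
          (Finset.univ.filter fun i => rankOf (v i) c ≤ k).card).card ≤ 2 * β * n := by
  obtain ⟨localized, card_le⟩ := changed_score_candidates_localized_general k v u
  have discordant_le (i : Fin n) : #(discordantPairs (v i) (u i)) ≤ β :=
    (hdis i).trans <| (single_le_sum_of_canonicallyOrdered (mem_univ i)).trans hsum
  refine ⟨fun c hc => (localized c hc).imp fun i hi => ?_, card_le.trans ?_⟩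
  · have := discordant_le i
    rw [mem_approvalWindow] at hi
    omega
  · rw [mul_assoc, mul_comm β]
    gcongr
    simpa using sum_le_card_nsmul univ _ β fun i _ => discordant_le i
end

section
/- Let (P_1,…,P_n) be a successful election pattern, let u_1,…,u_n be votes on a finite candidate set C with top-k sets T_i = {c : rank(c,u_i) ≤ k}, let p ∈ C, and let α : C → {1,…,nk} be a coloring such that α(c) = 1 if and only if c = p. Suppose that for every i the restriction of α to T_i is injective and α(T_i) = P_i. Then for every candidate c we have |{i : c ∈ T_i}| ≤ |{i : α(c) ∈ P_i}| ≤ |{i : 1 ∈ P_i}| = |{i : p ∈ T_i}|; hence p is a k-approval winner of (u_1,…,u_n). -/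
open Finset

/-- The set of top-`k` candidates of a vote `v`, i.e. `{c : rank(c,v) ≤ k}` — exactly
the candidates receiving a point from `v` under `k`-approval. -/
def topSet {C : Type*} [Fintype C] [DecidableEq C] {m : ℕ} (k : ℕ) (v : Vote C m) :
    Finset C :=
  Finset.univ.filter fun c => rankOf v c ≤ k

section ColoredSets

variable {ι C β : Type*} [DecidableEq β] {α : C → β} {e : β} {p : C}

theorem mem_image_iff_mem_of_forall_eq_iff (hα : ∀ c, α c = e ↔ c = p) (s : Finset C) :
    e ∈ s.image α ↔ p ∈ s := by
  simp only [mem_image, hα, exists_eq_right]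

variable [Fintype ι] [DecidableEq C] {T : ι → Finset C} {P : ι → Finset β}

theorem card_filter_mem_le_of_mapsTo (hT : ∀ i, Set.MapsTo α (T i) (P i)) (c : C) :
    #{i | c ∈ T i} ≤ #{i | α c ∈ P i} :=
  card_le_card <| monotone_filter_right _ fun i _ hc ↦ hT i hc

theorem card_filter_mem_eq_of_forall_eq_iff (himg : ∀ i, (T i).image α = P i)
    (hα : ∀ c, α c = e ↔ c = p) : #{i | e ∈ P i} = #{i | p ∈ T i} := by
  simp only [← himg, mem_image_iff_mem_of_forall_eq_iff hα]

theorem nice_coloring_yields_winner_general (himg : ∀ i, (T i).image α = P i)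
    (hsucc : ∀ c, #{i | α c ∈ P i} ≤ #{i | e ∈ P i}) (hα : ∀ c, α c = e ↔ c = p) :
    (∀ c, #{i | c ∈ T i} ≤ #{i | α c ∈ P i} ∧ #{i | α c ∈ P i} ≤ #{i | e ∈ P i} ∧
      #{i | e ∈ P i} = #{i | p ∈ T i}) ∧
    ∀ c, #{i | c ∈ T i} ≤ #{i | p ∈ T i} := by
  have approvals_le (c : C) : #{i | c ∈ T i} ≤ #{i | α c ∈ P i} :=
    card_filter_mem_le_of_mapsTo (fun i _ hc ↦ himg i ▸ mem_image_of_mem α hc) c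
  have approvals_eq : #{i | e ∈ P i} = #{i | p ∈ T i} :=
    card_filter_mem_eq_of_forall_eq_iff himg hα
  refine ⟨fun c ↦ ⟨approvals_le c, hsucc c, approvals_eq⟩, fun c ↦ ?_⟩
  calc #{i | c ∈ T i}
    _ ≤ #{i | α c ∈ P i} := approvals_le c
    _ ≤ #{i | e ∈ P i} := hsucc c
    _ = #{i | p ∈ T i} := approvals_eq

end ColoredSets

/-- Let `(P_1, …, P_n)` be a successful election pattern, let
`u_1, …, u_n` be votes with top-`k` sets `T_i`, and let `α : C → {1, …, nk}` be a
coloring with `α(c) = 1` iff `c = p`, injective on each `T_i` with `α(T_i) = P_i`.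
Then for every candidate `c`,
`|{i : c ∈ T_i}| ≤ |{i : α(c) ∈ P_i}| ≤ |{i : 1 ∈ P_i}| = |{i : p ∈ T_i}|`;
hence `p` is a `k`-approval winner of `(u_1, …, u_n)`. -/
theorem nice_coloring_yields_winner
    {C : Type*} [Fintype C] [DecidableEq C] {m n k : ℕ}
    (P : Fin n → Finset ℕ)
    (hPsub : ∀ i, P i ⊆ Finset.Icc 1 (n * k))
    (hPcard : ∀ i, (P i).card = k)
    (hsucc : ∀ e ∈ Finset.Icc 1 (n * k),
      (Finset.univ.filter fun i => e ∈ P i).card ≤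
        (Finset.univ.filter fun i => (1 : ℕ) ∈ P i).card)
    (u : Fin n → Vote C m) (p : C)
    (α : C → ℕ) (hαrange : ∀ c, α c ∈ Finset.Icc 1 (n * k))
    (hα1 : ∀ c, α c = 1 ↔ c = p)
    (hinj : ∀ i, Set.InjOn α ↑(topSet k (u i)))
    (himg : ∀ i, (topSet k (u i)).image α = P i) :
    (∀ c : C,
      (Finset.univ.filter fun i => c ∈ topSet k (u i)).card ≤
          (Finset.univ.filter fun i => α c ∈ P i).card ∧
        (Finset.univ.filter fun i => α c ∈ P i).card ≤
          (Finset.univ.filter fun i => (1 : ℕ) ∈ P i).card ∧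
        (Finset.univ.filter fun i => (1 : ℕ) ∈ P i).card =
          (Finset.univ.filter fun i => p ∈ topSet k (u i)).card) ∧
    ∀ c : C,
      (Finset.univ.filter fun i => c ∈ topSet k (u i)).card ≤
        (Finset.univ.filter fun i => p ∈ topSet k (u i)).card :=
  nice_coloring_yields_winner_general himg (fun c ↦ hsucc _ (hαrange c)) hα1
end
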